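/- Let X be a Hilbert space, A ⊆ B(X) a C*-subalgebra with strong operator closure M containing id_X. Then the unit ball of the standard Hilbert A-module H_A is dense in the unit ball of H_A•M in the strong topology 𝒯_s: for every ξ ∈ H_A•M with ‖ξ‖ ≤ 1 and every ε > 0 and finite V ⊆ X, there exists x ∈ H_A with ‖x‖ ≤ ‖ξ‖ and ‖⟨ξ − x, ξ − x⟩(v)‖ < ε for all v ∈ V. -/

import Mathlib

open scoped ComplexOrder
open Filter Topology

section KD
variable {X : Type*} [NormedAddCommGroup X] [InnerProductSpace ℂ X] [CompleteSpace X]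

def KDSot (A : StarSubalgebra ℂ (X →L[ℂ] X)) (m : X →L[ℂ] X) : Prop :=
  ∀ ε : ℝ, 0 < ε → ∀ V : Finset X, ∃ a' ∈ A, ∀ v ∈ V, ‖m v - a' v‖ < ε

theorem kd_abs {E Z : Type*} [AddCommGroup E] [Module ℝ E] [NormedAddCommGroup Z]
    [InnerProductSpace ℝ Z] [CompleteSpace Z] (L : E → Z) (S : Submodule ℝ E)
    (hadd : ∀ a b, L (a + b) = L a + L b) (hsmul : ∀ (c : ℝ) a, L (c • a) = c • L a) (d : E)
    (h : ∀ z : Z, (∀ a ∈ S, inner ℝ z (L a) = 0) → inner ℝ z (L d) = 0) (ε : ℝ) (hε : 0 < ε) :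
    ∃ a ∈ S, ‖L d - L a‖ < ε := by
  let L' : E →ₗ[ℝ] Z := { toFun := L, map_add' := hadd, map_smul' := hsmul }
  have key : L' d ∈ (S.map L').topologicalClosure := by
    rw [← Submodule.orthogonal_orthogonal_eq_closure, Submodule.mem_orthogonal]
    intro z hz
    rw [Submodule.mem_orthogonal'] at hz
    exact h z fun a ha => hz _ ⟨a, ha, rfl⟩
  rw [← SetLike.mem_coe, Submodule.topologicalClosure_coe, Metric.mem_closure_iff] at key
  obtain ⟨_, ⟨a, haA, rfl⟩, hlt⟩ := key ε hε
  rw [dist_eq_norm] at hlt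
  exact ⟨a, haA, hlt⟩

noncomputable def kdL (V : Finset X) (a : X →L[ℂ] X) : PiLp 2 (fun _ : V ⊕ V => X) :=
  WithLp.toLp 2 (Sum.elim (fun j => a (j : X)) (fun j => (star a) (j : X)))

theorem kdL_add (V : Finset X) (a b : X →L[ℂ] X) : kdL V (a + b) = kdL V a + kdL V b := by
  ext i; rcases i with i | i <;> simp [kdL]

theorem kdL_sub (V : Finset X) (a b : X →L[ℂ] X) : kdL V (a - b) = kdL V a - kdL V b := by
  ext i; rcases i with i | i <;> simp [kdL]

theorem kdL_smul (V : Finset X) (c : ℝ) (a : X →L[ℂ] X) : kdL V (c • a) = c • kdL V a := by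
  ext i; rcases i with i | i <;> simp [kdL, star_smul]

theorem kd_strong_star (A : StarSubalgebra ℂ (X →L[ℂ] X)) (d : X →L[ℂ] X) (hd : KDSot A d)
    (ε : ℝ) (hε : 0 < ε) (V : Finset X) :
    ∃ a ∈ A, ∀ v ∈ V, ‖d v - a v‖ < ε ∧ ‖(star d) v - (star a) v‖ < ε := by
  classical
  let : InnerProductSpace ℝ X := InnerProductSpace.rclikeToReal ℂ X
  have key := kd_abs (kdL V) (A.toSubalgebra.toSubmodule.restrictScalars ℝ) (kdL_add V)
    (fun c a => kdL_smul V c a) d ?_ ε hε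
  · obtain ⟨a, haA, hlt⟩ := key
    refine ⟨a, haA, fun v hv => ?_⟩
    rw [← kdL_sub] at hlt
    have h1 := (PiLp.norm_apply_le (kdL V (d - a)) (Sum.inl ⟨v, hv⟩)).trans_lt hlt
    have h2 := (PiLp.norm_apply_le (kdL V (d - a)) (Sum.inr ⟨v, hv⟩)).trans_lt hlt
    refine ⟨h1, ?_⟩
    have h3 : ‖(star (d - a)) v‖ < ε := h2
    rwa [star_sub] at h3
  · intro z hz
    let C : ℝ := ∑ j : V, (‖z (Sum.inl j)‖ + ‖(j : X)‖)
    have hC : 0 ≤ C := Finset.sum_nonneg fun j _ => by positivity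
    have hbound : ∀ δ : ℝ, 0 < δ → |inner ℝ z (kdL V d)| ≤ δ * C := by
      intro δ hδ
      obtain ⟨a, haA, ha⟩ := hd δ hδ (V ∪ Finset.univ.image (fun j : V => z (Sum.inr j)))
      have h0 : inner ℝ z (kdL V a) = 0 := hz a haA
      have h1 : inner ℝ z (kdL V d) = inner ℝ z (kdL V (d - a)) := by
        rw [kdL_sub, inner_sub_right, h0, sub_zero]
      rw [h1, PiLp.inner_apply, Fintype.sum_sum_type, ← Finset.sum_add_distrib, Finset.mul_sum]
      refine (Finset.abs_sum_le_sum_abs _ _).trans (Finset.sum_le_sum fun j _ => ?_)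
      refine (abs_add_le _ _).trans ?_
      rw [mul_add]
      refine add_le_add ?_ ?_
      · refine (abs_real_inner_le_norm _ _).trans ?_
        rw [mul_comm]
        refine mul_le_mul_of_nonneg_right ?_ (norm_nonneg _)
        exact (ha j (Finset.mem_union_left _ j.2)).le
      · have h2 : inner ℝ (z (Sum.inr j)) ((kdL V (d - a)) (Sum.inr j))
            = inner ℝ ((d - a) (z (Sum.inr j))) (j : X) := by
          change (inner ℂ (z (Sum.inr j)) ((star (d - a)) (j : X))).re
            = (inner ℂ ((d - a) (z (Sum.inr j))) (j : X)).re
          rw [ContinuousLinearMap.star_eq_adjoint, ContinuousLinearMap.adjoint_inner_right]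
        rw [h2]
        refine (abs_real_inner_le_norm _ _).trans ?_
        refine mul_le_mul_of_nonneg_right ?_ (norm_nonneg _)
        exact (ha _ (Finset.mem_union_right _ (Finset.mem_image_of_mem _ (Finset.mem_univ j)))).le
    by_contra hne
    have hpos : 0 < |inner ℝ z (kdL V d)| := abs_pos.mpr hne
    have := hbound (|inner ℝ z (kdL V d)| / (2 * (C + 1))) (by positivity)
    rw [div_mul_eq_mul_div, le_div_iff₀ (by positivity)] at this
    nlinarith

noncomputable def kdM (A : StarSubalgebra ℂ (X →L[ℂ] X)) : StarSubalgebra ℂ (X →L[ℂ] X) where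
  carrier := {m | KDSot A m}
  mul_mem' := by
    classical
    intro m n hm hn ε hε V
    obtain ⟨a, haA, ha⟩ := hm (ε / 2) (by positivity) (V.image n)
    obtain ⟨c, hcA, hc⟩ := hn (ε / (2 * (‖a‖ + 1))) (by positivity) V
    refine ⟨a * c, mul_mem haA hcA, fun v hv => ?_⟩
    have h1 := ha _ (Finset.mem_image_of_mem n hv)
    have h2 := hc v hv
    have h3 : (m * n) v - (a * c) v = (m (n v) - a (n v)) + a (n v - c v) := by
      simp
    rw [h3]
    refine (norm_add_le _ _).trans_lt ?_
    have h4 : ‖a (n v - c v)‖ ≤ ε / 2 := by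
      refine (a.le_opNorm _).trans ?_
      calc ‖a‖ * ‖n v - c v‖ ≤ (‖a‖ + 1) * (ε / (2 * (‖a‖ + 1))) := by
            gcongr; linarith
        _ = ε / 2 := by field_simp
    linarith
  add_mem' := by
    intro m n hm hn ε hε V
    obtain ⟨a, haA, ha⟩ := hm (ε / 2) (by positivity) V
    obtain ⟨c, hcA, hc⟩ := hn (ε / 2) (by positivity) V
    refine ⟨a + c, add_mem haA hcA, fun v hv => ?_⟩
    have h3 : (m + n) v - (a + c) v = (m v - a v) + (n v - c v) := by
      simp; abel
    rw [h3]
    refine (norm_add_le _ _).trans_lt ?_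
    linarith [ha v hv, hc v hv]
  algebraMap_mem' := by
    intro r ε hε V
    exact ⟨_, algebraMap_mem A r, fun v _ => by simpa using hε⟩
  star_mem' := by
    intro m hm ε hε V
    obtain ⟨a, haA, ha⟩ := kd_strong_star A m hm ε hε V
    exact ⟨star a, star_mem haA, fun v hv => (ha v hv).2⟩

theorem kdM_closed (A : StarSubalgebra ℂ (X →L[ℂ] X)) : IsClosed (kdM A : Set (X →L[ℂ] X)) := by
  rw [← closure_subset_iff_isClosed]
  intro m hm ε hε V
  rw [Metric.mem_closure_iff] at hm
  let C : ℝ := ∑ v ∈ V, ‖v‖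
  have hC : 0 ≤ C := Finset.sum_nonneg fun j _ => by positivity
  obtain ⟨n, hn, hmn⟩ := hm (ε / (2 * (C + 1))) (by positivity)
  obtain ⟨a, haA, ha⟩ := hn (ε / 2) (by positivity) V
  refine ⟨a, haA, fun v hv => ?_⟩
  have h3 : m v - a v = (m - n) v + (n v - a v) := by simp
  rw [h3]
  refine (norm_add_le _ _).trans_lt ?_
  have h4 : ‖(m - n) v‖ ≤ ε / 2 := by
    refine ((m - n).le_opNorm _).trans ?_
    rw [dist_eq_norm] at hmn
    have hv' : ‖v‖ ≤ C + 1 := by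
      have := Finset.single_le_sum (f := fun v : X => ‖v‖) (fun i _ => norm_nonneg i) hv
      linarith
    calc ‖m - n‖ * ‖v‖ ≤ (ε / (2 * (C + 1))) * (C + 1) := by gcongr
      _ = ε / 2 := by field_simp
  linarith [ha v hv]

theorem kd_ident (c : ℕ → X →L[ℂ] X) (N : ℕ) (w q : X) (e : ℕ → X)
    (h : w + ∑ k ∈ Finset.range N, (star (c k)) (c k w)
      = q + ∑ k ∈ Finset.range N, (star (c k)) (e k)) :
    ‖w‖ ^ 2 + ∑ k ∈ Finset.range N, ‖c k w‖ ^ 2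
      = (inner ℂ w q).re + ∑ k ∈ Finset.range N, (inner ℂ (c k w) (e k)).re := by
  have h1 := congrArg (fun z => (inner ℂ w z).re) h
  simp only [inner_add_right, inner_sum, Complex.add_re, Complex.re_sum,
    ContinuousLinearMap.star_eq_adjoint, ContinuousLinearMap.adjoint_inner_right] at h1
  have h2 : ∀ z : X, (inner ℂ z z).re = ‖z‖ ^ 2 := fun z => by
    have := inner_self_eq_norm_sq (𝕜 := ℂ) z
    simpa using this
  simp only [h2] at h1
  exact h1

theorem kd_re_inner_le (a b : X) : (inner ℂ a b).re ≤ ‖a‖ * ‖b‖ := by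
  have := re_inner_le_norm (𝕜 := ℂ) a b
  simpa using this

theorem kd_vec (c : ℕ → X →L[ℂ] X) (N : ℕ) (w q : X) (e : ℕ → X)
    (h : w + ∑ k ∈ Finset.range N, (star (c k)) (c k w)
      = q + ∑ k ∈ Finset.range N, (star (c k)) (e k)) :
    ‖w‖ ^ 2 + ∑ k ∈ Finset.range N, ‖c k w‖ ^ 2
      ≤ ‖q‖ ^ 2 + ∑ k ∈ Finset.range N, ‖e k‖ ^ 2 := by
  have h1 := kd_ident c N w q e h
  have h2 : ∀ a b : X, (inner ℂ a b).re ≤ (‖a‖ ^ 2 + ‖b‖ ^ 2) / 2 := fun a b => by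
    have := kd_re_inner_le a b
    nlinarith [sq_nonneg (‖a‖ - ‖b‖)]
  have h3 : ∑ k ∈ Finset.range N, (inner ℂ (c k w) (e k)).re
      ≤ (∑ k ∈ Finset.range N, ‖c k w‖ ^ 2 + ∑ k ∈ Finset.range N, ‖e k‖ ^ 2) / 2 := by
    rw [← Finset.sum_add_distrib, Finset.sum_div]
    exact Finset.sum_le_sum fun k _ => h2 _ _
  linarith [h2 w q]

theorem kd_sum_nonneg (x : ℕ → X →L[ℂ] X) (F : Finset ℕ) : 0 ≤ ∑ k ∈ F, star (x k) * x k :=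
  Finset.sum_nonneg fun k _ => star_mul_self_nonneg _

theorem kd_norm_le (x : ℕ → X →L[ℂ] X) (N : ℕ)
    (h : ∀ v, ∑ k ∈ Finset.range N, ‖x k v‖ ^ 2 ≤ ‖v‖ ^ 2) :
    ‖∑ k ∈ Finset.range N, star (x k) * x k‖ ≤ 1 := by
  have h0 := kd_sum_nonneg x (Finset.range N)
  rw [CStarAlgebra.norm_le_one_iff_of_nonneg _ h0, ContinuousLinearMap.le_def,
    ContinuousLinearMap.isPositive_def']
  refine ⟨(IsSelfAdjoint.one _).sub h0.isSelfAdjoint, fun v => ?_⟩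
  rw [ContinuousLinearMap.reApplyInnerSelf_apply]
  simp only [sub_apply, one_apply_eq_self, inner_sub_left,
    sum_apply, sum_inner, mul_apply_eq_comp,
    ContinuousLinearMap.star_eq_adjoint, ContinuousLinearMap.adjoint_inner_left, map_sub, map_sum,
    inner_self_eq_norm_sq]
  linarith [h v]

theorem kd_resolvent (s : X →L[ℂ] X) (hs : 0 ≤ s) :
    ∃ R : X →L[ℂ] X, (1 + s) * R = 1 ∧
      ∀ B : StarSubalgebra ℂ (X →L[ℂ] X), IsClosed (B : Set (X →L[ℂ] X)) → s ∈ B → R ∈ B := by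
  have hsa : IsSelfAdjoint s := hs.isSelfAdjoint
  have hsp : ∀ t ∈ spectrum ℝ s, 0 ≤ t := fun t ht => spectrum_nonneg_of_nonneg hs ht
  have hc : ContinuousOn (fun t : ℝ => (1 + t)⁻¹) (spectrum ℝ s) := by
    refine ContinuousOn.inv₀ (f := fun t : ℝ => 1 + t) (by fun_prop) fun t ht => ?_
    have h : 0 < 1 + t := by linarith [hsp t ht]
    exact h.ne'
  refine ⟨cfc (fun t : ℝ => (1 + t)⁻¹) s, ?_, ?_⟩
  · have h1 : 1 + s = cfc (fun t : ℝ => 1 + t) s := by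
      rw [cfc_const_add (1 : ℝ) (fun t => t) s, cfc_id' ℝ s, map_one]
    rw [h1, ← cfc_mul _ _ s, ← cfc_one ℝ s]
    refine cfc_congr fun t ht => ?_
    have : 0 < 1 + t := by linarith [hsp t ht]
    simp [this.ne']
  · intro B hB hsB
    have := hB
    exact cfc_mem (𝕜' := ℂ) _ hsB

theorem kd_cayley (s : X →L[ℂ] X) (hs : 0 ≤ s) (hs1 : s ≤ 1) :
    ∃ g y : X →L[ℂ] X, star g = g ∧ g * y = 1 ∧ 1 + g * s * g = g + g ∧
      ∀ B : StarSubalgebra ℂ (X →L[ℂ] X), IsClosed (B : Set (X →L[ℂ] X)) → s ∈ B → g ∈ B := by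
  have hsa : IsSelfAdjoint s := hs.isSelfAdjoint
  have hsp : ∀ t ∈ spectrum ℝ s, t ≤ 1 := by
    have := (le_algebraMap_iff_spectrum_le (r := (1 : ℝ)) (a := s)).1 (by simpa using hs1)
    exact this
  have hpos : ∀ t : ℝ, 0 < 1 + √(1 - t) := fun t => by positivity
  let φ : ℝ → ℝ := fun t => (1 + √(1 - t))⁻¹
  have hc : Continuous φ :=
    Continuous.inv₀ (by fun_prop) fun t => (hpos t).ne'
  have hc' := hc.continuousOn (s := spectrum ℝ s)
  have hy : ContinuousOn (fun t : ℝ => 1 + √(1 - t)) (spectrum ℝ s) := by fun_prop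
  refine ⟨cfc φ s, cfc (fun t : ℝ => 1 + √(1 - t)) s, ?_, ?_, ?_, ?_⟩
  · exact (cfc_predicate (p := IsSelfAdjoint) _ s).star_eq
  · rw [← cfc_mul φ _ s hc' hy, ← cfc_one ℝ s]
    refine cfc_congr fun t _ => ?_
    simp [φ, (hpos t).ne']
  · have h1 : (1 : X →L[ℂ] X) + cfc φ s * s * cfc φ s
        = cfc (fun t : ℝ => 1 + φ t * t * φ t) s := by
      have h2 : ContinuousOn (fun t : ℝ => φ t * t) (spectrum ℝ s) := hc'.mul continuousOn_id
      rw [cfc_const_add (1 : ℝ) (fun t : ℝ => φ t * t * φ t) s (h2.mul hc'), map_one,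
        cfc_mul (fun t : ℝ => φ t * t) φ s h2 hc',
        cfc_mul φ (fun t : ℝ => t) s hc' continuousOn_id, cfc_id' ℝ s]
    rw [h1, ← cfc_add s φ φ hc' hc']
    refine cfc_congr fun t ht => ?_
    have h2 : √(1 - t) ^ 2 = 1 - t := Real.sq_sqrt (by linarith [hsp t ht])
    have h3 := (hpos t).ne'
    simp only [φ]
    field_simp
    linarith
  · intro B hB hsB
    have := hB
    exact cfc_mem (𝕜' := ℂ) _ hsB

theorem kd_fin (A : StarSubalgebra ℂ (X →L[ℂ] X)) (N : ℕ) (b : ℕ → X →L[ℂ] X)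
    (hb : ∀ k, KDSot A (b k)) (hn : ‖∑ k ∈ Finset.range N, star (b k) * b k‖ ≤ 1)
    (ε : ℝ) (hε : 0 < ε) (V : Finset X) :
    ∃ x : ℕ → X →L[ℂ] X, (∀ k, x k ∈ A.topologicalClosure) ∧
      ‖∑ k ∈ Finset.range N, star (x k) * x k‖ ≤ 1 ∧
      ∀ k ∈ Finset.range N, ∀ v ∈ V, ‖b k v - x k v‖ < ε := by
  classical
  set s := ∑ k ∈ Finset.range N, star (b k) * b k with hs
  have hs0 : 0 ≤ s := kd_sum_nonneg b _
  have hs1 : s ≤ 1 := (CStarAlgebra.norm_le_one_iff_of_nonneg s hs0).1 hn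
  obtain ⟨g, y, hg, hgy, hgs, hgM⟩ := kd_cayley s hs0 hs1
  have hbM : ∀ k, b k ∈ kdM A := hb
  have hsM : s ∈ kdM A := sum_mem fun k _ => mul_mem (star_mem (hbM k)) (hbM k)
  have hgM' : g ∈ kdM A := hgM _ (kdM_closed A) hsM
  let d : ℕ → X →L[ℂ] X := fun k => b k * g
  have hdM : ∀ k, KDSot A (d k) := fun k => mul_mem (hbM k) hgM'
  have hdd : 1 + ∑ k ∈ Finset.range N, star (d k) * d k = g + g := by
    rw [← hgs, hs, Finset.mul_sum, Finset.sum_mul]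
    simp only [d, star_mul, hg, mul_assoc]
  let u : X → X := fun v => (2⁻¹ : ℂ) • y v
  have hu : ∀ v, u v + ∑ k ∈ Finset.range N, (star (d k)) (d k (u v)) = v := by
    intro v
    have h1 := congrArg (fun T : X →L[ℂ] X => T (u v)) hdd
    have h2 := congrArg (fun T : X →L[ℂ] X => T v) hgy
    simp only [add_apply, one_apply_eq_self,
      sum_apply, mul_apply_eq_comp] at h1 h2
    rw [h1, map_smul, h2, ← add_smul]
    norm_num
  have hdu : ∀ k v, (2 : ℂ) • d k (u v) = b k v := by
    intro k v
    have h2 := congrArg (fun T : X →L[ℂ] X => T v) hgy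
    simp only [one_apply_eq_self, mul_apply_eq_comp] at h2
    simp only [d, u, mul_apply_eq_comp, map_smul, h2, smul_smul]
    norm_num
  let W : Finset X := V.image u ∪ (Finset.range N).biUnion fun k => V.image fun v => d k (u v)
  let δ : ℝ := ε / (4 * (N + 2))
  have hδ : 0 < δ := by positivity
  choose c hcA hc using fun k => kd_strong_star A (d k) (hdM k) δ hδ W
  set t := ∑ k ∈ Finset.range N, star (c k) * c k with ht
  obtain ⟨R, hR, hRA⟩ := kd_resolvent t (kd_sum_nonneg c _)
  have hle := A.le_topologicalClosure
  have htA : t ∈ A.topologicalClosure :=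
    hle (sum_mem fun k _ => mul_mem (star_mem (hcA k)) (hcA k))
  have hRA' := hRA _ A.isClosed_topologicalClosure htA
  have hRv : ∀ v, R v + ∑ k ∈ Finset.range N, (star (c k)) (c k (R v)) = v := by
    intro v
    have h1 := congrArg (fun T : X →L[ℂ] X => T v) hR
    simpa [ht, sum_apply] using h1
  refine ⟨fun k => (2 : ℂ) • (c k * R), fun k => ?_, ?_, ?_⟩
  · exact A.topologicalClosure.smul_mem (mul_mem (hle (hcA k)) hRA') _
  · refine kd_norm_le _ N fun v => ?_
    have h1 := kd_ident c N (R v) v (fun _ => 0) (by simpa using hRv v)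
    have h2 := kd_re_inner_le (R v) v
    have h3 : ∀ k, ‖((2 : ℂ) • (c k * R)) v‖ ^ 2 = 4 * ‖c k (R v)‖ ^ 2 := fun k => by
      simp [norm_smul, mul_pow]; norm_num
    simp only [h3, ← Finset.mul_sum]
    simp only [inner_zero_right, Complex.zero_re, Finset.sum_const_zero, add_zero] at h1
    nlinarith [sq_nonneg (‖v‖ - 2 * ‖R v‖)]
  · intro k hk v hv
    let w := R v - u v
    let q := ∑ k ∈ Finset.range N, ((star (d k)) (d k (u v)) - (star (c k)) (d k (u v)))
    let e : ℕ → X := fun k => d k (u v) - c k (u v)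
    have hw := kd_vec c N w q e (by
      have h1 : ∑ k ∈ Finset.range N, (star (c k)) (c k w)
          = ∑ k ∈ Finset.range N, (star (c k)) (c k (R v))
            - ∑ k ∈ Finset.range N, (star (c k)) (c k (u v)) := by
        rw [← Finset.sum_sub_distrib]; simp [w]
      have h2 : q + ∑ k ∈ Finset.range N, (star (c k)) (e k)
          = ∑ k ∈ Finset.range N, (star (d k)) (d k (u v))
            - ∑ k ∈ Finset.range N, (star (c k)) (c k (u v)) := by
        rw [← Finset.sum_add_distrib, ← Finset.sum_sub_distrib]; simp [e]
      rw [h1, h2]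
      have h3 := hRv v
      have h4 := hu v
      rw [← eq_sub_iff_add_eq'] at h3 h4
      rw [h3, h4]
      simp only [w]
      abel)
    have huW : u v ∈ W := Finset.mem_union_left _ (Finset.mem_image_of_mem _ hv)
    have hduW : ∀ j ∈ Finset.range N, d j (u v) ∈ W := fun j hj =>
      Finset.mem_union_right _ (Finset.mem_biUnion.2 ⟨j, hj,
        Finset.mem_image_of_mem (fun v => d j (u v)) hv⟩)
    have he : ∀ j, ‖e j‖ ≤ δ := fun j => (hc j _ huW).1.le
    have hq : ‖q‖ ≤ N * δ := by
      refine (norm_sum_le _ _).trans ?_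
      refine (Finset.sum_le_card_nsmul _ _ δ fun j hj => (hc j _ (hduW j hj)).2.le).trans ?_
      simp
    have he2 : ∑ k ∈ Finset.range N, ‖e k‖ ^ 2 ≤ N * δ ^ 2 := by
      refine (Finset.sum_le_card_nsmul _ _ (δ ^ 2) fun j _ => ?_).trans (by simp)
      exact pow_le_pow_left₀ (norm_nonneg _) (he j) 2
    have hck : ‖c k w‖ ^ 2 ≤ ∑ k ∈ Finset.range N, ‖c k w‖ ^ 2 :=
      Finset.single_le_sum (f := fun k => ‖c k w‖ ^ 2) (fun i _ => by positivity) hk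
    have hcw : ‖c k w‖ ≤ (N + 1) * δ := by
      refine le_of_sq_le_sq ?_ (by positivity)
      have hq2 := pow_le_pow_left₀ (norm_nonneg _) hq 2
      have hN : (0 : ℝ) ≤ N := by positivity
      nlinarith [sq_nonneg ‖w‖, mul_nonneg hN (sq_nonneg δ), sq_nonneg δ]
    have hfin : b k v - ((2 : ℂ) • (c k * R)) v = (2 : ℂ) • (e k - c k w) := by
      rw [← hdu k v]
      simp [e, w, smul_sub]
    rw [hfin, norm_smul]
    have h5 : ‖e k - c k w‖ ≤ (N + 2) * δ := by
      refine (norm_sub_le _ _).trans ?_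
      nlinarith [he k]
    have h6 : (N + 2) * δ = ε / 4 := by
      simp only [δ]; field_simp
    have h7 : ‖(2 : ℂ)‖ = 2 := by simp
    rw [h7]
    linarith

theorem kd_fin2 (A : StarSubalgebra ℂ (X →L[ℂ] X)) (N : ℕ) (b : ℕ → X →L[ℂ] X)
    (hb : ∀ k, KDSot A (b k)) (r : ℝ) (hr : 0 < r)
    (hn : ‖∑ k ∈ Finset.range N, star (b k) * b k‖ ≤ r)
    (ε : ℝ) (hε : 0 < ε) (V : Finset X) :
    ∃ x : ℕ → X →L[ℂ] X, (∀ k, x k ∈ A) ∧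
      ‖∑ k ∈ Finset.range N, star (x k) * x k‖ ≤ r ∧
      ∀ k ∈ Finset.range N, ∀ v ∈ V, ‖b k v - x k v‖ < ε := by
  have hsr : 0 < √r := Real.sqrt_pos.2 hr
  have hsr2 : √r * √r = r := Real.mul_self_sqrt hr.le
  have hsum : ∀ (t : ℝ) (z : ℕ → X →L[ℂ] X),
      ∑ k ∈ Finset.range N, star (t • z k) * (t • z k)
        = (t * t) • ∑ k ∈ Finset.range N, star (z k) * z k := by
    intro t z
    rw [Finset.smul_sum]
    refine Finset.sum_congr rfl fun k _ => ?_
    rw [star_smul, smul_mul_smul_comm]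
    simp
  obtain ⟨y, hyA, hy1, hyb⟩ := kd_fin A N (fun k => (√r)⁻¹ • b k)
    (fun k => by
      have h := (kdM A).smul_mem (show b k ∈ kdM A from hb k) (((√r)⁻¹ : ℝ) : ℂ)
      have h2 : (((√r)⁻¹ : ℝ) : ℂ) • b k = (√r)⁻¹ • b k := by
        ext v; simp only [smul_apply]; exact Complex.coe_smul _ _
      rw [h2] at h
      exact h)
    (by
      rw [hsum, norm_smul, ← mul_inv, hsr2, Real.norm_of_nonneg (by positivity)]
      rw [inv_mul_le_iff₀ hr]; simpa using hn) (ε / √r) (by positivity) V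
  have hyb' : ∀ k ∈ Finset.range N, ∀ v ∈ V, ‖b k v - (((1 : ℝ) * √r) • y k) v‖ < ε := by
    intro k hk v hv
    have h1 := hyb k hk v hv
    have h2 : b k v - (((1 : ℝ) * √r) • y k) v = √r • (((√r)⁻¹ • b k) v - y k v) := by
      simp [smul_sub, smul_smul, hsr.ne']
    rw [h2, norm_smul, Real.norm_of_nonneg hsr.le]
    rwa [lt_div_iff₀ hsr, mul_comm] at h1
  have hev : ∀ᶠ t : ℝ in 𝓝 1,
      ∀ k ∈ Finset.range N, ∀ v ∈ V, ‖b k v - ((t * √r) • y k) v‖ < ε := by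
    rw [Filter.eventually_all_finset]
    intro k hk
    rw [Filter.eventually_all_finset]
    intro v hv
    have hcont : Continuous fun t : ℝ => ‖b k v - ((t * √r) • y k) v‖ := by
      simp only [smul_apply]; fun_prop
    exact hcont.continuousAt.eventually_lt continuousAt_const (hyb' k hk v hv)
  obtain ⟨t, ⟨ht0, ht1⟩, ht⟩ :
      ∃ t : ℝ, (0 < t ∧ t < 1) ∧
        ∀ k ∈ Finset.range N, ∀ v ∈ V, ‖b k v - ((t * √r) • y k) v‖ < ε := by
    have h1 : ∀ᶠ t : ℝ in 𝓝[<] 1, 0 < t ∧ t < 1 := by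
      filter_upwards [Ioo_mem_nhdsLT (show (0 : ℝ) < 1 by norm_num)] with t ht using ht
    exact (h1.and (hev.filter_mono nhdsWithin_le_nhds)).exists
  let U : Set (ℕ → X →L[ℂ] X) := {x | ‖∑ k ∈ Finset.range N, star (x k) * x k‖ < r} ∩
    ⋂ k ∈ Finset.range N, ⋂ v ∈ V, {x | ‖b k v - x k v‖ < ε}
  have hU : IsOpen U := by
    refine IsOpen.inter ?_ ?_
    · refine isOpen_lt ?_ continuous_const
      fun_prop
    · refine isOpen_biInter_finset fun k _ => isOpen_biInter_finset fun v _ => ?_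
      refine isOpen_lt ?_ continuous_const
      have h1 : Continuous fun x : ℕ → X →L[ℂ] X => x k v :=
        (ContinuousLinearMap.apply ℂ X v).continuous.comp (continuous_apply k)
      fun_prop
  have hmemU : (fun k => (t * √r) • y k) ∈ U := by
    refine ⟨?_, ?_⟩
    · change ‖∑ k ∈ Finset.range N, star ((t * √r) • y k) * ((t * √r) • y k)‖ < r
      rw [hsum, norm_smul, Real.norm_of_nonneg (by positivity)]
      have h1 : t * √r * (t * √r) = t * t * r := by
        linear_combination t * t * hsr2
      rw [h1]
      have h2 : t * t < 1 := by nlinarith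
      have h3 : t * t * r < r := by nlinarith
      calc t * t * r * ‖∑ k ∈ Finset.range N, star (y k) * y k‖ ≤ t * t * r * 1 := by gcongr
        _ < r := by linarith
    · simp only [Set.mem_iInter]
      exact ht
  have hcl : (fun k => (t * √r) • y k) ∈
      closure (Set.pi Set.univ fun _ : ℕ => (A : Set (X →L[ℂ] X))) := by
    rw [closure_pi_set]
    intro k _
    have h := A.topologicalClosure.smul_mem (hyA k) ((t * √r : ℝ) : ℂ)
    have h2 : ((t * √r : ℝ) : ℂ) • y k = (t * √r) • y k := by
      ext v; simp only [smul_apply]; exact Complex.coe_smul _ _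
    rw [h2] at h
    exact h
  obtain ⟨x, hxU, hxA⟩ := mem_closure_iff.1 hcl U hU hmemU
  refine ⟨x, fun k => hxA k trivial, hxU.1.le, fun k hk v hv => ?_⟩
  have := hxU.2
  simp only [Set.mem_iInter] at this
  exact this k hk v hv

theorem kd_term_norm (x : ℕ → X →L[ℂ] X) (N k : ℕ) (hk : k ∈ Finset.range N)
    (h : ‖∑ k ∈ Finset.range N, star (x k) * x k‖ ≤ 1) : ‖x k‖ ≤ 1 := by
  have h1 : star (x k) * x k ≤ ∑ k ∈ Finset.range N, star (x k) * x k :=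
    Finset.single_le_sum (f := fun k => star (x k) * x k) (fun i _ => star_mul_self_nonneg _) hk
  have h2 := CStarAlgebra.norm_le_norm_of_nonneg_of_le (star_mul_self_nonneg (x k)) h1
  rw [CStarRing.norm_star_mul_self] at h2
  nlinarith [norm_nonneg (x k)]

end KD

/-- Kaplansky-type density for `H_A` in `H_A • M`: let `A` be a C*-subalgebra
of `B(X)` whose strong operator closure `M` contains `id_X`.  An element `ξ = {bₙ}` of the
unit ball of `H_A • M` is a sequence of operators, each in the norm closure of `A·M`
(`M` described by strong-operator approximation by elements of `A`), with
`Σ bₖ*bₖ` norm-convergent of norm at most `1`.  Then for every `ε > 0` and finite `V ⊆ X`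
there is `x ∈ H_A` (a sequence in `A` with `Σ xₖ*xₖ` norm-convergent) with `‖x‖ ≤ ‖ξ‖` and
`‖⟨ξ − x, ξ − x⟩(v)‖ < ε` for all `v ∈ V`. -/
theorem kaplansky_density_standard_module
    {X : Type*} [NormedAddCommGroup X] [InnerProductSpace ℂ X] [CompleteSpace X]
    (A : StarSubalgebra ℂ (X →L[ℂ] X))
    (hA1 : ∀ ε : ℝ, 0 < ε → ∀ V : Finset X, ∃ a ∈ A, ∀ v ∈ V, ‖v - a v‖ < ε)
    (b : ℕ → (X →L[ℂ] X))
    (hmem : ∀ n, b n ∈ closure {c : X →L[ℂ] X | ∃ a ∈ A, ∃ m : X →L[ℂ] X,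
      (∀ ε : ℝ, 0 < ε → ∀ V : Finset X, ∃ a' ∈ A, ∀ v ∈ V, ‖m v - a' v‖ < ε) ∧ c = a * m})
    (hsum : Summable fun k => star (b k) * b k)
    (hnorm : ‖∑' k, star (b k) * b k‖ ≤ 1) :
    ∀ ε : ℝ, 0 < ε → ∀ V : Finset X, ∃ x : ℕ → (X →L[ℂ] X),
      (∀ n, x n ∈ A) ∧
      (Summable fun k => star (x k) * x k) ∧
      ‖∑' k, star (x k) * x k‖ ≤ ‖∑' k, star (b k) * b k‖ ∧
      (Summable fun k => star (b k - x k) * (b k - x k)) ∧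
      ∀ v ∈ V, ‖(∑' k, star (b k - x k) * (b k - x k)) v‖ < ε := by
  intro ε hε V
  have hb : ∀ k, KDSot A (b k) := by
    intro k
    have hsub : {c : X →L[ℂ] X | ∃ a ∈ A, ∃ m : X →L[ℂ] X,
      (∀ ε : ℝ, 0 < ε → ∀ V : Finset X, ∃ a' ∈ A, ∀ v ∈ V, ‖m v - a' v‖ < ε) ∧ c = a * m}
        ⊆ (kdM A : Set (X →L[ℂ] X)) := by
      rintro c ⟨a, haA, m, hm, rfl⟩
      have haM : a ∈ kdM A := fun ε hε V => ⟨a, haA, fun v _ => by simpa using hε⟩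
      exact mul_mem haM (show m ∈ kdM A from hm)
    exact closure_minimal hsub (kdM_closed A) (hmem k)
  have hpart : ∀ N, ‖∑ k ∈ Finset.range N, star (b k) * b k‖ ≤ ‖∑' k, star (b k) * b k‖ := by
    intro N
    refine CStarAlgebra.norm_le_norm_of_nonneg_of_le (kd_sum_nonneg b _) ?_
    exact hsum.sum_le_tsum _ fun k _ => star_mul_self_nonneg _
  rcases (norm_nonneg (∑' k, star (b k) * b k)).eq_or_lt with h0 | hpos
  · refine ⟨fun _ => 0, fun _ => zero_mem A, ?_, ?_, ?_, ?_⟩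
    · simpa using summable_zero
    · simp
    · simpa using hsum
    · intro v _
      have h1 : ∑' k, star (b k) * b k = 0 := norm_eq_zero.1 h0.symm
      simp only [sub_zero, h1]
      simpa using hε
  let C : ℝ := ∑ v ∈ V, ‖v‖
  have hC : 0 ≤ C := Finset.sum_nonneg fun j _ => by positivity
  have hη : 0 < ε / (2 * (C + 1)) := by positivity
  obtain ⟨N, hN⟩ := (Metric.tendsto_atTop.1 hsum.hasSum.tendsto_sum_nat _ hη)
  have hN := hN N le_rfl
  rw [dist_comm, dist_eq_norm] at hN
  obtain ⟨x, hxA, hx1, hxb⟩ := kd_fin2 A N b hb _ hpos (hpart N) (ε / (4 * (N + 1)))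
    (by positivity) V
  let x' : ℕ → X →L[ℂ] X := fun k => if k ∈ Finset.range N then x k else 0
  have hx'1 : ∀ k ∈ Finset.range N, x' k = x k := fun k hk => if_pos hk
  have hx'0 : ∀ k ∉ Finset.range N, x' k = 0 := fun k hk => if_neg hk
  have hS1 : HasSum (fun k => star (x' k) * x' k) (∑ k ∈ Finset.range N, star (x' k) * x' k) :=
    hasSum_sum_of_ne_finset_zero fun k hk => by simp [hx'0 k hk]
  have hS2 : HasSum (fun k => star (b k - x' k) * (b k - x' k))
      (∑' k, star (b k) * b k + ∑ k ∈ Finset.range N,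
        (star (b k - x' k) * (b k - x' k) - star (b k) * b k)) := by
    have h1 : HasSum (fun k => star (b k - x' k) * (b k - x' k) - star (b k) * b k)
        (∑ k ∈ Finset.range N, (star (b k - x' k) * (b k - x' k) - star (b k) * b k)) :=
      hasSum_sum_of_ne_finset_zero fun k hk => by simp [hx'0 k hk]
    have h2 := hsum.hasSum.add h1
    simpa using h2
  have hxx : ∑ k ∈ Finset.range N, star (x' k) * x' k = ∑ k ∈ Finset.range N, star (x k) * x k :=
    Finset.sum_congr rfl fun k hk => by rw [hx'1 k hk]
  refine ⟨x', fun k => ?_, hS1.summable, ?_, hS2.summable, fun v hv => ?_⟩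
  · by_cases hk : k ∈ Finset.range N
    · rw [hx'1 k hk]; exact hxA k
    · rw [hx'0 k hk]; exact zero_mem A
  · rw [hS1.tsum_eq, hxx]; exact hx1
  · rw [hS2.tsum_eq]
    have h1 : ∑' k, star (b k) * b k + ∑ k ∈ Finset.range N,
        (star (b k - x' k) * (b k - x' k) - star (b k) * b k)
        = (∑' k, star (b k) * b k - ∑ k ∈ Finset.range N, star (b k) * b k)
          + ∑ k ∈ Finset.range N, star (b k - x k) * (b k - x k) := by
      rw [Finset.sum_sub_distrib]
      have h2 : ∑ k ∈ Finset.range N, star (b k - x' k) * (b k - x' k)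
          = ∑ k ∈ Finset.range N, star (b k - x k) * (b k - x k) :=
        Finset.sum_congr rfl fun k hk => by rw [hx'1 k hk]
      rw [h2]; abel
    rw [h1, add_apply, sum_apply]
    have hvC : ‖v‖ ≤ C := Finset.single_le_sum (f := fun v : X => ‖v‖) (fun i _ => norm_nonneg i) hv
    have h3 : ‖(∑' k, star (b k) * b k - ∑ k ∈ Finset.range N, star (b k) * b k) v‖ < ε / 2 := by
      refine (ContinuousLinearMap.le_opNorm _ _).trans_lt ?_
      calc _ ≤ ε / (2 * (C + 1)) * C := by gcongr
        _ < ε / (2 * (C + 1)) * (C + 1) := by gcongr; linarith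
        _ = ε / 2 := by field_simp
    have h4 : ∀ k ∈ Finset.range N, ‖(star (b k - x k) * (b k - x k)) v‖
        ≤ 2 * (ε / (4 * (N + 1))) := by
      intro k hk
      have h5 : ‖b k - x k‖ ≤ 2 := by
        have := kd_term_norm b N k hk ((hpart N).trans hnorm)
        have := kd_term_norm x N k hk (hx1.trans hnorm)
        linarith [norm_sub_le (b k) (x k)]
      rw [mul_apply_eq_comp]
      refine (ContinuousLinearMap.le_opNorm _ _).trans ?_
      rw [norm_star]
      have h6 := (hxb k hk v hv).le
      rw [sub_apply]
      gcongr
    have h7 : ‖∑ k ∈ Finset.range N, (star (b k - x k) * (b k - x k)) v‖ ≤ ε / 2 := by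
      refine (norm_sum_le _ _).trans ((Finset.sum_le_card_nsmul _ _ _ h4).trans ?_)
      rw [Finset.card_range, nsmul_eq_mul]
      have : (N : ℝ) * (2 * (ε / (4 * (N + 1)))) = ε / 2 * (N / (N + 1)) := by
        field_simp; ring
      rw [this]
      have h8 : (N : ℝ) / (N + 1) ≤ 1 := by
        rw [div_le_one (by positivity)]; linarith
      nlinarith
    exact (norm_add_le _ _).trans_lt (by linarith)
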